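/- If p is a prime such that p ≡ 1 (mod 8) and p = a² + b² for some integers a, b with both a + b and a − b congruent to 3 or −3 modulo 8, then 64p ∈ S(16). -/

import Mathlib

open Complex Finset

noncomputable def zeta16 : ℂ := Complex.exp (2 * Real.pi * Complex.I / 16)

noncomputable def fpoly (a : Fin 16 → ℤ) (x : ℂ) : ℂ := ∑ k : Fin 16, (a k : ℂ) * x ^ (k : ℕ)

noncomputable def Nprod (a : Fin 16 → ℤ) (d : ℕ) : ℂ :=
  ∏ l ∈ Finset.filter (fun l => Nat.gcd l 16 = d) (Finset.range 16), fpoly a (zeta16 ^ l)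

def circMatrix (a : Fin 16 → ℤ) : Matrix (Fin 16) (Fin 16) ℤ := fun i j => a (i - j)

def S16 : Set ℤ := { n | ∃ a : Fin 16 → ℤ, n = (circMatrix a).det }

def bcoef (a : Fin 16 → ℤ) (k : Fin 16) : ℤ := (a k + a (k + 8)) + (a (k + 4) + a (k + 12))
def ccoef (a : Fin 16 → ℤ) (k : Fin 16) : ℤ := (a k + a (k + 8)) - (a (k + 4) + a (k + 12))
def ecoef (a : Fin 16 → ℤ) (k : Fin 16) : ℤ := a k - a (k + 8)

/-!
For `F ∈ ℤ[X] / (X¹⁶ - 1)` the circulant determinant is the product of the norms of `F` modulo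
`X⁴ - 1`, `X⁴ + 1` and `X⁸ + 1`. The middle one is the absolute norm of an element of `ℤ[ζ]`,
`ζ = ζ₈`. Choosing `F` with reductions `1 + X + 2X²`, `1 + X + 2X² + 4k(X)` and `1 + X` makes the
outer factors `16` and `2`, so `32 N(1 + ζ + 2ζ² + 4k)` is a determinant for every `k ∈ ℤ[ζ]`.

It remains to see that `2p` is such an absolute norm. Since `2` is a square modulo `p` and
`ℤ[ζ] = ℤ[i][√i]` is norm-Euclidean, `a + bi` is the relative norm of some `x ∈ ℤ[ζ]`. Then
`(1 + ζ)x` has relative norm `(1 - i)(a + bi) = (a + b) - (a - b)i`, of norm `2p`, and the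
congruences modulo `8` on `a ± b` force some element of the same absolute norm, obtained from it
through units and automorphisms, to be congruent to `1 + ζ + 2ζ²` modulo `4`.
-/

section Circulant

open Matrix

variable {R : Type*} {n : ℕ}

/-- The negacirculant matrix of `v`: the matrix of multiplication by `∑ i, v i * X ^ i` on
`R[X] / (X ^ n + 1)` in the basis `1, X, …, X ^ (n - 1)`. -/
def negacirculant [Neg R] (v : Fin n → R) : Matrix (Fin n) (Fin n) R :=
  of fun i j => if j ≤ i then v (i - j) else -v (i - j)

theorem det_fromBlocks_swap [CommRing R] {m : Type*} [Fintype m] [DecidableEq m]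
    (A B : Matrix m m R) :
    (fromBlocks A B B A).det = (A + B).det * (A - B).det := by
  have h : fromBlocks 1 1 0 1 * fromBlocks A B B A * fromBlocks 1 (-1) 0 1 =
      fromBlocks (A + B) 0 B (A - B) := by
    simp only [fromBlocks_multiply, one_mul, mul_one, mul_neg, mul_zero, zero_mul, add_zero,
      zero_add]
    congr 1 <;> abel
  simpa [det_mul] using congrArg det h

theorem castAdd_sub_castAdd (i j : Fin n) : Fin.castAdd n i - Fin.castAdd n j =
    if j ≤ i then Fin.castAdd n (i - j) else Fin.natAdd n (i - j) := by
  split_ifs with h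
  · ext
    rw [Fin.sub_val_of_le (show Fin.castAdd n j ≤ Fin.castAdd n i from h)]
    simp [Fin.sub_val_of_le h]
  · have h' : i < j := not_le.1 h
    ext
    rw [Fin.coe_sub_iff_lt.2 (show Fin.castAdd n i < Fin.castAdd n j from h')]
    simp only [Fin.val_castAdd, Fin.val_natAdd, Fin.coe_sub_iff_lt.2 h']
    lia

theorem castAdd_sub_natAdd (i j : Fin n) : Fin.castAdd n i - Fin.natAdd n j =
    if j ≤ i then Fin.natAdd n (i - j) else Fin.castAdd n (i - j) := by
  have hlt : Fin.castAdd n i < Fin.natAdd n j := by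
    rw [Fin.lt_def, Fin.val_castAdd, Fin.val_natAdd]
    lia
  split_ifs with h
  · ext
    rw [Fin.coe_sub_iff_lt.2 hlt]
    simp only [Fin.val_castAdd, Fin.val_natAdd, Fin.sub_val_of_le h]
    lia
  · have h' : i < j := not_le.1 h
    ext
    rw [Fin.coe_sub_iff_lt.2 hlt]
    simp only [Fin.val_castAdd, Fin.val_natAdd, Fin.coe_sub_iff_lt.2 h']
    lia

theorem natAdd_sub_natAdd (i j : Fin n) :
    Fin.natAdd n i - Fin.natAdd n j = Fin.castAdd n i - Fin.castAdd n j := by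
  ext
  simp only [Fin.sub_def, Fin.val_natAdd, Fin.val_castAdd]
  congr 1
  lia

theorem natAdd_sub_castAdd (i j : Fin n) :
    Fin.natAdd n i - Fin.castAdd n j = Fin.castAdd n i - Fin.natAdd n j := by
  have hj := j.isLt
  ext
  simp only [Fin.sub_def, Fin.val_natAdd, Fin.val_castAdd]
  rw [← Nat.add_mod_right (n + n - (n + j) + i)]
  congr 1
  lia

theorem det_circulant_eq_mul_det_negacirculant [CommRing R] (v : Fin (n + n) → R) :
    (circulant v).det =
      (circulant fun i : Fin n => v (Fin.castAdd n i) + v (Fin.natAdd n i)).det *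
        (negacirculant fun i : Fin n => v (Fin.castAdd n i) - v (Fin.natAdd n i)).det := by
  let A : Matrix (Fin n) (Fin n) R := of fun i j => v (Fin.castAdd n i - Fin.castAdd n j)
  let B : Matrix (Fin n) (Fin n) R := of fun i j => v (Fin.castAdd n i - Fin.natAdd n j)
  have hblocks : (circulant v).submatrix finSumFinEquiv finSumFinEquiv = fromBlocks A B B A := by
    ext (i | i) (j | j)
    · rfl
    · rfl
    · exact congrArg v (natAdd_sub_castAdd i j)
    · exact congrArg v (natAdd_sub_natAdd i j)
  have hsum : A + B = circulant fun i => v (Fin.castAdd n i) + v (Fin.natAdd n i) := by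
    ext i j
    simp only [A, B, Matrix.add_apply, of_apply, circulant_apply, castAdd_sub_castAdd,
      castAdd_sub_natAdd]
    split_ifs
    · rfl
    · exact add_comm _ _
  have hdiff : A - B = negacirculant fun i => v (Fin.castAdd n i) - v (Fin.natAdd n i) := by
    ext i j
    simp only [A, B, Matrix.sub_apply, of_apply, negacirculant, castAdd_sub_castAdd,
      castAdd_sub_natAdd]
    split_ifs
    · rfl
    · exact (neg_sub _ _).symm
  rw [← det_submatrix_equiv_self finSumFinEquiv, hblocks, det_fromBlocks_swap, hsum, hdiff]

theorem det_negacirculant_fin_four [CommRing R] (v : Fin 4 → R) : (negacirculant v).det =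
    (v 0 ^ 2 - v 2 ^ 2 + 2 * v 1 * v 3) ^ 2 + (2 * v 0 * v 2 - v 1 ^ 2 + v 3 ^ 2) ^ 2 := by
  have h : negacirculant v = !![v 0, -v 3, -v 2, -v 1; v 1, v 0, -v 3, -v 2;
      v 2, v 1, v 0, -v 3; v 3, v 2, v 1, v 0] := by
    ext i j
    fin_cases i <;> fin_cases j <;> rfl
  simp [h, det_succ_row_zero, Fin.sum_univ_succ, Fin.succAbove]
  ring

theorem det_negacirculant_one_add_X :
    (negacirculant ![1, 1, 0, 0, 0, 0, 0, 0] : Matrix (Fin 8) (Fin 8) ℤ).det = 2 := by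
  let M : Matrix (Fin 8) (Fin 8) ℤ := negacirculant ![1, 1, 0, 0, 0, 0, 0, 0]
  have hfirst : (M.submatrix Fin.succ (Fin.succAbove 0)).det = 1 := by
    have hlower : ∀ i j : Fin 7, i < j → M i.succ (Fin.succAbove 0 j) = 0 := by decide
    have hM : (M.submatrix Fin.succ (Fin.succAbove 0)).IsLowerTriangular := fun i j => hlower i j
    rw [det_of_isLowerTriangular _ hM]
    decide
  have hlast : (M.submatrix Fin.succ (Fin.succAbove (Fin.last 7))).det = 1 := by
    have hupper : ∀ i j : Fin 7, j < i → M i.succ ((Fin.last 7).succAbove j) = 0 := by decide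
    have hM : (M.submatrix Fin.succ (Fin.last 7).succAbove).IsUpperTriangular :=
      fun i j => hupper i j
    rw [det_of_isUpperTriangular hM]
    decide
  have hrow : ∀ i : Fin 6, M 0 i.castSucc.succ = 0 := by decide
  have h0 : M 0 0 = 1 := by decide
  have h7 : M 0 (Fin.last 7) = -1 := by decide
  calc M.det = M 0 0 * (M.submatrix Fin.succ (Fin.succAbove 0)).det -
        M 0 (Fin.last 7) * (M.submatrix Fin.succ (Fin.succAbove (Fin.last 7))).det := by
        rw [det_succ_row_zero, Fin.sum_univ_succ, Fin.sum_univ_castSucc]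
        simp [hrow, ← sub_eq_add_neg, Odd.neg_one_pow (show Odd 7 by decide)]
    _ = 2 := by rw [h0, h7, hfirst, hlast]; norm_num

end Circulant

/-- The ring `ℤ[ζ₈]`, as `ℤ[i][√i]`: the element `x₀ + x₁ζ₈ + x₂ζ₈² + x₃ζ₈³` has
`re.re = x₀`, `im.re = x₁`, `re.im = x₂` and `im.im = x₃`. -/
abbrev ZetaEightInt : Type := QuadraticAlgebra GaussianInt Zsqrtd.sqrtd 0

open scoped QuadraticAlgebra

section QuadraticAlgebra

variable {R : Type*} [CommRing R] [IsDomain R]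

theorem eq_zero_and_eq_zero_of_sq_eq_mul_sq [IsIntegrallyClosed R] {a x y : R}
    (ha : ¬IsSquare a) (h : x ^ 2 = a * y ^ 2) : x = 0 ∧ y = 0 := by
  obtain ⟨c, rfl⟩ : y ∣ x :=
    (IsIntegrallyClosed.pow_dvd_pow_iff two_ne_zero).1 (Dvd.intro_left a h.symm)
  suffices hy : y = 0 by simp [hy]
  by_contra hy
  refine ha ⟨c, mul_right_cancel₀ (pow_ne_zero 2 hy) ?_⟩
  rw [← h]
  ring

theorem exists_associated_norm_of_prime_of_dvd_norm {a b : R}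
    [IsDomain (QuadraticAlgebra R a b)] [DecompositionMonoid (QuadraticAlgebra R a b)]
    {π : R} (hπ : Prime π) {z : QuadraticAlgebra R a b} (hdvd : π ∣ z.norm)
    (hndvd : ¬algebraMap R _ π ∣ z) : ∃ x : QuadraticAlgebra R a b, Associated x.norm π := by
  have hstar : ¬algebraMap R _ π ∣ star z := by
    rw [QuadraticAlgebra.algebraMap_dvd_iff, QuadraticAlgebra.re_star, QuadraticAlgebra.im_star,
      dvd_neg]
    rw [QuadraticAlgebra.algebraMap_dvd_iff] at hndvd
    exact fun ⟨hre, him⟩ => hndvd ⟨(dvd_add_left (him.mul_left b)).1 hre, him⟩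
  have hnprime : ¬Prime (algebraMap R (QuadraticAlgebra R a b) π) := fun h =>
    (h.dvd_or_dvd (by
      rw [← QuadraticAlgebra.algebraMap_norm_eq_mul_star]
      exact map_dvd _ hdvd)).elim hndvd hstar
  have hnunit : ¬IsUnit (algebraMap R (QuadraticAlgebra R a b) π) := fun h => hndvd h.dvd
  obtain ⟨x, y, hxy, hx, hy⟩ :
      ∃ x y, algebraMap R (QuadraticAlgebra R a b) π = x * y ∧ ¬IsUnit x ∧ ¬IsUnit y := by
    simpa [irreducible_iff, hnunit] using mt Irreducible.prime hnprime
  rw [QuadraticAlgebra.isUnit_iff_norm_isUnit] at hx hy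
  have hnorm : x.norm * y.norm = π ^ 2 := by
    rw [← map_mul, ← hxy, QuadraticAlgebra.norm_algebraMap]
  obtain ⟨i, hi, hassoc⟩ := (dvd_prime_pow hπ 2).1 (Dvd.intro _ hnorm)
  interval_cases i
  · exact (hx (by simpa using hassoc)).elim
  · exact ⟨x, by simpa using hassoc⟩
  · obtain ⟨u, hu⟩ := hassoc
    have hxne : x.norm ≠ 0 := left_ne_zero_of_mul (hnorm ▸ pow_ne_zero 2 hπ.ne_zero)
    exact (hy (mul_left_cancel₀ hxne (hnorm.trans hu.symm) ▸ u.isUnit)).elim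

end QuadraticAlgebra

section Gaussian

theorem even_im_of_isSquare {x : GaussianInt} (h : IsSquare x) : Even x.im := by
  obtain ⟨y, rfl⟩ := h
  exact ⟨y.re * y.im, by simp [mul_comm]⟩

theorem not_isSquare_sqrtd : ¬IsSquare (Zsqrtd.sqrtd : GaussianInt) := fun h => by
  simpa using even_im_of_isSquare h

theorem not_isSquare_neg_sqrtd : ¬IsSquare (-Zsqrtd.sqrtd : GaussianInt) := fun h => by
  simpa using even_im_of_isSquare h

theorem zsqrtd_parallelogram_law {d : ℤ} (x y : ℤ√d) :
    (x - y).norm + (x + y).norm = 2 * (x.norm + y.norm) := by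
  simp only [Zsqrtd.norm_def, Zsqrtd.re_sub, Zsqrtd.im_sub, Zsqrtd.re_add, Zsqrtd.im_add]
  ring

theorem two_mul_norm_mod_le (x : GaussianInt) {y : GaussianInt} (hy : y ≠ 0) :
    2 * (x % y).norm ≤ y.norm := by
  have hy' : (y : ℂ) ≠ 0 := by rwa [Ne, ← GaussianInt.toComplex_zero, GaussianInt.toComplex_inj]
  have hround : Complex.normSq ((x / y : ℂ) - ((x / y : GaussianInt) : ℂ)) ≤ 1 / 2 := by
    have hre := abs_sub_round (x / y : ℂ).re
    have him := abs_sub_round (x / y : ℂ).im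
    rw [normSq_apply, sub_re, sub_im, GaussianInt.toComplex_re_div, GaussianInt.toComplex_im_div]
    nlinarith [abs_le.1 hre, abs_le.1 him]
  have hmod : (((x % y).norm : ℤ) : ℝ) =
      y.norm * Complex.normSq ((x / y : ℂ) - ((x / y : GaussianInt) : ℂ)) := by
    rw [GaussianInt.intCast_real_norm, GaussianInt.intCast_real_norm, ← normSq_mul, mul_sub,
      mul_div_cancel₀ _ hy']
    simp [GaussianInt.mod_def]
  have hnorm : (0 : ℝ) ≤ y.norm := mod_cast GaussianInt.norm_nonneg y
  have hle : (2 * (x % y).norm : ℝ) ≤ y.norm := by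
    rw [hmod]
    nlinarith
  exact_mod_cast hle

theorem gaussianInt_eq_of_isUnit {u : GaussianInt} (hu : IsUnit u) :
    u = 1 ∨ u = -1 ∨ u = Zsqrtd.sqrtd ∨ u = -Zsqrtd.sqrtd := by
  have hnorm : u.re * u.re + u.im * u.im = 1 := by
    simpa [Zsqrtd.norm_def] using (Zsqrtd.norm_eq_one_iff' (by norm_num) u).2 hu
  have hre := abs_le.1 (abs_le_one_iff_mul_self_le_one.2 (by nlinarith : u.re * u.re ≤ 1))
  have him := abs_le.1 (abs_le_one_iff_mul_self_le_one.2 (by nlinarith : u.im * u.im ≤ 1))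
  simp only [Zsqrtd.ext_iff, Zsqrtd.re_one, Zsqrtd.im_one, Zsqrtd.re_neg, Zsqrtd.im_neg,
    Zsqrtd.re_sqrtd, Zsqrtd.im_sqrtd]
  obtain ⟨x, y⟩ := u
  dsimp only at hnorm hre him ⊢
  rcases hre with ⟨hre1, hre2⟩
  rcases him with ⟨him1, him2⟩
  interval_cases x <;> interval_cases y <;> lia

theorem prime_of_prime_norm {z : GaussianInt} (hz : Prime z.norm) : Prime z := by
  have : IsLocalHom (Zsqrtd.normMonoidHom (d := -1)) :=
    ⟨fun x => (Zsqrtd.isUnit_iff_norm_isUnit x).2⟩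
  exact (Irreducible.of_map (f := Zsqrtd.normMonoidHom) hz.irreducible).prime

end Gaussian

namespace ZetaEightInt

/-- The absolute norm `N : ℤ[ζ₈] → ℤ`, through the tower `ℤ ⊆ ℤ[i] ⊆ ℤ[ζ₈]`. -/
def absNorm : ZetaEightInt →* ℤ := Zsqrtd.normMonoidHom.comp QuadraticAlgebra.norm

theorem absNorm_apply (x : ZetaEightInt) : absNorm x = x.norm.norm := rfl

theorem absNorm_nonneg (x : ZetaEightInt) : 0 ≤ absNorm x := GaussianInt.norm_nonneg _

theorem absNorm_pos {x : ZetaEightInt} : 0 < absNorm x ↔ x ≠ 0 := by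
  rw [absNorm_apply, GaussianInt.norm_pos, not_iff_not]
  refine ⟨fun h => ?_, fun h => by simp [h]⟩
  rw [QuadraticAlgebra.norm_def] at h
  obtain ⟨hre, him⟩ := eq_zero_and_eq_zero_of_sq_eq_mul_sq not_isSquare_sqrtd
    (x := x.re) (y := x.im) (by linear_combination h)
  exact QuadraticAlgebra.ext hre him

theorem absNorm_star (x : ZetaEightInt) : absNorm (star x) = absNorm x := by
  rw [absNorm_apply, absNorm_apply, QuadraticAlgebra.norm_star]

-- With `α = z.re ^ 2` and `β = i * z.im ^ 2`, the parallelogram law bounds `N(α - β) + N(α + β)`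
-- by `N(m) ^ 2`, and `N(α + β)` is positive since `-i` is not a square.
theorem absNorm_lt_norm_sq {z : ZetaEightInt} {m : GaussianInt} (hm : m ≠ 0)
    (hre : 2 * z.re.norm ≤ m.norm) (him : 2 * z.im.norm ≤ m.norm) :
    absNorm z < m.norm ^ 2 := by
  have hmpos : 0 < m.norm := GaussianInt.norm_pos.2 hm
  obtain rfl | hz := eq_or_ne z 0
  · simpa [absNorm_apply, Zsqrtd.norm_zero] using pow_pos hmpos 2
  have hparallelogram := zsqrtd_parallelogram_law (z.re * z.re) (Zsqrtd.sqrtd * (z.im * z.im))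
  simp only [Zsqrtd.norm_mul] at hparallelogram
  have hsub : z.re * z.re - Zsqrtd.sqrtd * (z.im * z.im) = z.norm := by
    rw [QuadraticAlgebra.norm_def]
    ring
  have hadd : 0 < (z.re * z.re + Zsqrtd.sqrtd * (z.im * z.im)).norm := by
    refine GaussianInt.norm_pos.2 fun h => hz ?_
    obtain ⟨hre₀, him₀⟩ := eq_zero_and_eq_zero_of_sq_eq_mul_sq not_isSquare_neg_sqrtd
      (x := z.re) (y := z.im) (by linear_combination h)
    exact QuadraticAlgebra.ext hre₀ him₀
  have hsqrtd : (Zsqrtd.sqrtd : GaussianInt).norm = 1 := by simp [Zsqrtd.norm_def]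
  rw [hsub, hsqrtd, ← absNorm_apply] at hparallelogram
  nlinarith [GaussianInt.norm_nonneg z.re, GaussianInt.norm_nonneg z.im]

noncomputable instance : Div ZetaEightInt :=
  ⟨fun t a => ⟨(t * star a).re / a.norm, (t * star a).im / a.norm⟩⟩

theorem div_def (t a : ZetaEightInt) :
    t / a = ⟨(t * star a).re / a.norm, (t * star a).im / a.norm⟩ := rfl

theorem sub_mul_div_mul_star (t a : ZetaEightInt) :
    (t - a * (t / a)) * star a = ⟨(t * star a).re % a.norm, (t * star a).im % a.norm⟩ := by
  calc (t - a * (t / a)) * star a = t * star a - a * star a * (t / a) := by ring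
    _ = t * star a - algebraMap _ _ a.norm * (t / a) := by
      rw [QuadraticAlgebra.algebraMap_norm_eq_mul_star]
    _ = _ := by
      ext1 <;> simp [GaussianInt.mod_def, div_def]

theorem absNorm_sub_mul_div_lt (t : ZetaEightInt) {a : ZetaEightInt} (ha : a ≠ 0) :
    absNorm (t - a * (t / a)) < absNorm a := by
  have hpos : 0 < absNorm a := absNorm_pos.2 ha
  have hnorm : a.norm ≠ 0 := GaussianInt.norm_pos.1 hpos
  refine lt_of_mul_lt_mul_right ?_ hpos.le
  calc absNorm (t - a * (t / a)) * absNorm a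
      = absNorm ⟨(t * star a).re % a.norm, (t * star a).im % a.norm⟩ := by
        rw [← sub_mul_div_mul_star, map_mul, absNorm_star]
    _ < a.norm.norm ^ 2 :=
        absNorm_lt_norm_sq hnorm (two_mul_norm_mod_le _ hnorm) (two_mul_norm_mod_le _ hnorm)
    _ = absNorm a * absNorm a := pow_two _

noncomputable instance : EuclideanDomain ZetaEightInt where
  quotient := (· / ·)
  remainder t a := t - a * (t / a)
  quotient_zero t := by ext <;> simp [div_def]
  quotient_mul_add_remainder_eq t a := by ring
  r := InvImage (· < ·) fun x => (absNorm x).natAbs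
  r_wellFounded := InvImage.wf _ Nat.lt_wfRel.wf
  remainder_lt t _ ha :=
    Int.natAbs_lt_natAbs_of_nonneg_of_lt (absNorm_nonneg _) (absNorm_sub_mul_div_lt t ha)
  mul_left_not_lt a b hb := by
    have hpos : 0 < (absNorm b).natAbs := Int.natAbs_pos.2 (absNorm_pos.2 hb).ne'
    simpa [InvImage, Int.natAbs_mul] using Nat.le_mul_of_pos_right _ hpos

open QuadraticAlgebra (omega)

theorem norm_omega : (omega : ZetaEightInt).norm = -Zsqrtd.sqrtd := by
  simp [QuadraticAlgebra.norm_def]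

theorem exists_norm_eq_of_isUnit {u : GaussianInt} (hu : IsUnit u) :
    ∃ x : ZetaEightInt, x.norm = u := by
  have hsq : (Zsqrtd.sqrtd * Zsqrtd.sqrtd : GaussianInt) = -1 := by decide
  rcases gaussianInt_eq_of_isUnit hu with rfl | rfl | rfl | rfl
  · exact ⟨1, map_one _⟩
  · exact ⟨omega ^ 2, by rw [map_pow, norm_omega]; linear_combination hsq⟩
  · exact ⟨omega ^ 3, by rw [map_pow, norm_omega]; linear_combination -Zsqrtd.sqrtd * hsq⟩
  · exact ⟨omega, norm_omega⟩

theorem exists_norm_eq_of_dvd_sq_sub_two {π y : GaussianInt} (hπ : Prime π)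
    (hdvd : π ∣ y ^ 2 - 2) (hndvd : ¬π ∣ 1 + Zsqrtd.sqrtd) :
    ∃ x : ZetaEightInt, x.norm = π := by
  -- The norm is `(1 + i) ^ 2 - i * y ^ 2 = -i * (y ^ 2 - 2)`.
  let z : ZetaEightInt := ⟨1 + Zsqrtd.sqrtd, y⟩
  have hz : z.norm = -Zsqrtd.sqrtd * (y ^ 2 - 2) := by
    have hi : (Zsqrtd.sqrtd * Zsqrtd.sqrtd : GaussianInt) = -1 := by decide
    rw [QuadraticAlgebra.norm_def]
    linear_combination hi
  obtain ⟨x, u, hu⟩ := exists_associated_norm_of_prime_of_dvd_norm hπ (z := z)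
    (hz ▸ hdvd.mul_left _) fun h => hndvd (QuadraticAlgebra.algebraMap_dvd_iff.1 h).1
  obtain ⟨v, hv⟩ := exists_norm_eq_of_isUnit u.isUnit
  exact ⟨x * v, by rw [map_mul, hv, hu]⟩

theorem exists_norm_eq_of_prime_one_mod_eight {p : ℕ} (hp : p.Prime) (h1 : p % 8 = 1)
    {π : GaussianInt} (hπ : π.norm = p) : ∃ x : ZetaEightInt, x.norm = π := by
  have : Fact p.Prime := ⟨hp⟩
  obtain ⟨y, hy⟩ : ∃ y : ℤ, (p : ℤ) ∣ y ^ 2 - 2 := by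
    obtain ⟨y, hy⟩ := (ZMod.exists_sq_eq_two_iff (by lia)).2 (Or.inl h1)
    refine ⟨y.cast, (ZMod.intCast_zmod_eq_zero_iff_dvd _ p).1 ?_⟩
    simp [hy, pow_two]
  have hdvd : π ∣ (y : GaussianInt) ^ 2 - 2 := by
    have hπp : π ∣ ((p : ℤ) : GaussianInt) := by
      rw [← hπ, Zsqrtd.norm_eq_mul_conj]
      exact dvd_mul_right _ _
    exact_mod_cast hπp.trans (Int.cast_dvd_cast _ _ hy)
  refine exists_norm_eq_of_dvd_sq_sub_two
    (prime_of_prime_norm (hπ ▸ Nat.prime_iff_prime_int.1 hp)) hdvd fun h => ?_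
  have h2 : (p : ℤ) ∣ 2 := by
    have hnorm : π.norm ∣ (1 + Zsqrtd.sqrtd : GaussianInt).norm := map_dvd Zsqrtd.normMonoidHom h
    simpa [hπ, Zsqrtd.norm_def] using hnorm
  have := Int.le_of_dvd two_pos h2
  have := hp.two_le
  lia

end ZetaEightInt

theorem modEq_one_or_neg_modEq_one {c : ℤ} (hc : Odd c) : c ≡ 1 [ZMOD 4] ∨ -c ≡ 1 [ZMOD 4] := by
  simp only [Int.odd_iff, Int.ModEq] at *
  lia

/-- The congruence `c ≡ ±3 (mod 8)`, imposed below on both coordinates of a relative norm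
`ℤ[ζ₈] → ℤ[i]`. -/
def IsPlusMinusThreeModEight (c : ℤ) : Prop := c ≡ 3 [ZMOD 8] ∨ c ≡ -3 [ZMOD 8]

theorem IsPlusMinusThreeModEight.neg {c : ℤ} (hc : IsPlusMinusThreeModEight c) :
    IsPlusMinusThreeModEight (-c) :=
  hc.elim (fun h => Or.inr h.neg) fun h => Or.inl h.neg

theorem IsPlusMinusThreeModEight.odd {c : ℤ} (hc : IsPlusMinusThreeModEight c) : Odd c := by
  rw [Int.odd_iff]
  rcases hc with h | h <;> simp only [Int.ModEq] at h <;> lia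

namespace ZetaEightInt

open QuadraticAlgebra (omega)

theorem re_norm (x : ZetaEightInt) :
    x.norm.re = x.re.re ^ 2 - x.re.im ^ 2 + 2 * (x.im.re * x.im.im) := by
  simp only [QuadraticAlgebra.norm_def, zero_mul, add_zero, Zsqrtd.re_sub, Zsqrtd.re_mul,
    Zsqrtd.im_mul, Zsqrtd.re_sqrtd, Zsqrtd.im_sqrtd]
  ring

theorem im_norm (x : ZetaEightInt) :
    x.norm.im = 2 * (x.re.re * x.re.im) - x.im.re ^ 2 + x.im.im ^ 2 := by
  simp only [QuadraticAlgebra.norm_def, zero_mul, add_zero, Zsqrtd.im_sub, Zsqrtd.re_mul,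
    Zsqrtd.im_mul, Zsqrtd.re_sqrtd, Zsqrtd.im_sqrtd]
  ring

theorem odd_re_norm_iff (x : ZetaEightInt) : Odd x.norm.re ↔ Odd (x.re.re + x.re.im) := by
  simp [re_norm, Int.odd_add, Int.odd_sub, Int.odd_pow, Int.even_pow]

theorem odd_im_norm_iff (x : ZetaEightInt) : Odd x.norm.im ↔ Odd (x.im.re + x.im.im) := by
  have h : ¬Odd (2 * (x.re.re * x.re.im)) := Int.not_odd_iff_even.2 (even_two_mul _)
  simp [im_norm, Int.odd_add, Int.odd_sub, Int.even_pow, h]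

theorem absNorm_omega_pow_mul (k : ℕ) (x : ZetaEightInt) :
    absNorm (omega ^ k * x) = absNorm x := by
  have h : absNorm omega = 1 := by simp [absNorm_apply, norm_omega, Zsqrtd.norm_def]
  rw [map_mul, map_pow, h, one_pow, one_mul]

theorem isPlusMinusThreeModEight_norm_omega_pow_mul (k : ℕ) {x : ZetaEightInt}
    (hre : IsPlusMinusThreeModEight x.norm.re) (him : IsPlusMinusThreeModEight x.norm.im) :
    IsPlusMinusThreeModEight (omega ^ k * x).norm.re ∧
      IsPlusMinusThreeModEight (omega ^ k * x).norm.im := by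
  induction k with
  | zero => simpa using ⟨hre, him⟩
  | succ k ih =>
    rw [pow_succ', mul_assoc, map_mul, norm_omega]
    simpa [-map_mul, -map_pow] using ⟨ih.2, ih.1.neg⟩

theorem exists_omega_pow_mul_odd {x : ZetaEightInt} (hre : Odd (x.re.re + x.re.im))
    (him : Odd (x.im.re + x.im.im)) :
    ∃ k : ℕ, Odd (omega ^ k * x).re.re ∧ Odd (omega ^ k * x).im.re := by
  have h2 := Int.odd_add'.1 hre
  have h3 := Int.odd_add'.1 him
  rcases Int.even_or_odd x.re.re with h0 | h0 <;> rcases Int.even_or_odd x.im.re with h1 | h1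
  · exact ⟨2, by simpa [pow_succ] using ⟨h2.2 h0, h3.2 h1⟩⟩
  · exact ⟨3, by simpa [pow_succ] using ⟨h1, h2.2 h0⟩⟩
  · exact ⟨1, by simpa using ⟨h3.2 h1, h0⟩⟩
  · exact ⟨0, by simpa using ⟨h0, h1⟩⟩

theorem one_add_omega_add_two_mul_omega_sq_add_four_mul (k : ZetaEightInt) :
    1 + omega + 2 * omega ^ 2 + 4 * k =
      ⟨⟨1 + 4 * k.re.re, 2 + 4 * k.re.im⟩, ⟨1 + 4 * k.im.re, 4 * k.im.im⟩⟩ := by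
  ext <;> simp [pow_two]

theorem exists_eq_add_four_mul {x : ZetaEightInt} (h0 : x.re.re ≡ 1 [ZMOD 4])
    (h1 : x.im.re ≡ 1 [ZMOD 4]) (h2 : x.re.im ≡ 2 [ZMOD 4]) (h3 : x.im.im ≡ 0 [ZMOD 4]) :
    ∃ k, x = 1 + omega + 2 * omega ^ 2 + 4 * k := by
  obtain ⟨k₀, hk₀⟩ := h0.symm.dvd
  obtain ⟨k₁, hk₁⟩ := h1.symm.dvd
  obtain ⟨k₂, hk₂⟩ := h2.symm.dvd
  obtain ⟨k₃, hk₃⟩ := h3.symm.dvd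
  refine ⟨⟨⟨k₀, k₂⟩, ⟨k₁, k₃⟩⟩, ?_⟩
  rw [one_add_omega_add_two_mul_omega_sq_add_four_mul]
  ext <;> lia

theorem exists_absNorm_add_four_mul_of_modEq {x : ZetaEightInt} (h0 : Odd x.re.re)
    (h1 : Odd x.im.re) (h2 : x.re.im ≡ 2 [ZMOD 4]) (h3 : x.im.im ≡ 0 [ZMOD 4]) :
    ∃ k, absNorm (1 + omega + 2 * omega ^ 2 + 4 * k) = absNorm x := by
  have hneg2 : -x.re.im ≡ 2 [ZMOD 4] := h2.neg
  have hneg3 : -x.im.im ≡ 0 [ZMOD 4] := by simpa using h3.neg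
  have key (y : ZetaEightInt) (hy : absNorm y = absNorm x) (hy0 : y.re.re ≡ 1 [ZMOD 4])
    (hy1 : y.im.re ≡ 1 [ZMOD 4]) (hy2 : y.re.im ≡ 2 [ZMOD 4]) (hy3 : y.im.im ≡ 0 [ZMOD 4]) :
    ∃ k, absNorm (1 + omega + 2 * omega ^ 2 + 4 * k) = absNorm x := by
    obtain ⟨k, rfl⟩ := exists_eq_add_four_mul hy0 hy1 hy2 hy3
    exact ⟨k, hy⟩
  have hneg (y : ZetaEightInt) : absNorm (-y) = absNorm y := by simp [absNorm_apply]
  rcases modEq_one_or_neg_modEq_one h0 with h0 | h0 <;>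
    rcases modEq_one_or_neg_modEq_one h1 with h1 | h1
  · exact key x rfl h0 h1 h2 h3
  · exact key (star x) (absNorm_star x) (by simpa using h0) h1 (by simpa using h2) hneg3
  · exact key (-star x) ((hneg _).trans (absNorm_star x)) (by simpa using h0) (by simpa using h1)
      (by simpa using hneg2) (by simpa using h3)
  · exact key (-x) (hneg x) h0 h1 hneg2 hneg3

theorem absNorm_mk_star_im_star_re (x : ZetaEightInt) :
    absNorm ⟨star x.im, star x.re⟩ = absNorm x := by
  simp only [absNorm_apply, Zsqrtd.norm_def, re_norm, im_norm, Zsqrtd.re_star, Zsqrtd.im_star]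
  ring

theorem re_im_add_im_im_modEq_two {x : ZetaEightInt}
    (hre : IsPlusMinusThreeModEight x.norm.re) (h0 : Odd x.re.re) (h1 : Odd x.im.re)
    (h2 : Even x.re.im) (h3 : Even x.im.im) :
    x.re.im + x.im.im ≡ 2 [ZMOD 4] := by
  obtain ⟨a, ha⟩ := h0
  obtain ⟨b, hb⟩ := h1
  obtain ⟨c, hc⟩ := h2
  obtain ⟨d, hd⟩ := h3
  obtain ⟨e, he⟩ := Int.even_mul_succ_self a
  obtain ⟨f, hf⟩ := Int.even_mul_pred_self c
  have hnorm : x.norm.re = 8 * (e - f + b * d) + 1 - 4 * (c - d) := by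
    rw [re_norm, ha, hb, hc, hd]
    linear_combination 4 * he - 4 * hf
  simp only [IsPlusMinusThreeModEight, Int.ModEq] at hre ⊢
  lia

theorem exists_absNorm_add_four_mul {x : ZetaEightInt}
    (hre : IsPlusMinusThreeModEight x.norm.re) (him : IsPlusMinusThreeModEight x.norm.im) :
    ∃ k, absNorm (1 + omega + 2 * omega ^ 2 + 4 * k) = absNorm x := by
  obtain ⟨j, h0, h1⟩ := exists_omega_pow_mul_odd
    ((odd_re_norm_iff x).1 hre.odd) ((odd_im_norm_iff x).1 him.odd)
  obtain ⟨hre, him⟩ := isPlusMinusThreeModEight_norm_omega_pow_mul j hre him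
  rw [← absNorm_omega_pow_mul j x]
  generalize omega ^ j * x = y at *
  have h2 : Even y.re.im := (Int.odd_add.1 ((odd_re_norm_iff y).1 hre.odd)).1 h0
  have h3 : Even y.im.im := (Int.odd_add.1 ((odd_im_norm_iff y).1 him.odd)).1 h1
  have h23 := re_im_add_im_im_modEq_two hre h0 h1 h2 h3
  have hcases : (y.re.im ≡ 2 [ZMOD 4] ∧ y.im.im ≡ 0 [ZMOD 4]) ∨
      (-y.im.im ≡ 2 [ZMOD 4] ∧ -y.re.im ≡ 0 [ZMOD 4]) := by
    simp only [Int.even_iff, Int.ModEq] at *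
    lia
  rcases hcases with ⟨h2, h3⟩ | ⟨h2, h3⟩
  · exact exists_absNorm_add_four_mul_of_modEq h0 h1 h2 h3
  · rw [← absNorm_mk_star_im_star_re y]
    exact exists_absNorm_add_four_mul_of_modEq h1 h0 h2 h3

theorem norm_one_add_omega_mul (x : ZetaEightInt) :
    ((1 + omega) * x).norm = ⟨x.norm.re + x.norm.im, -(x.norm.re - x.norm.im)⟩ := by
  have h : (1 + omega : ZetaEightInt).norm = 1 - Zsqrtd.sqrtd := by
    simp [QuadraticAlgebra.norm_def]
  rw [map_mul, h]
  ext1 <;> simp only [Zsqrtd.re_mul, Zsqrtd.im_mul, Zsqrtd.re_sub, Zsqrtd.im_sub, Zsqrtd.re_one,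
    Zsqrtd.im_one, Zsqrtd.re_sqrtd, Zsqrtd.im_sqrtd] <;> ring

end ZetaEightInt

section CirculantDeterminant

open Matrix ZetaEightInt
open QuadraticAlgebra (omega)

theorem det_circMatrix (a : Fin 16 → ℤ) : (circMatrix a).det =
    (circulant ![bcoef a 0, bcoef a 1, bcoef a 2, bcoef a 3]).det *
      (negacirculant ![ccoef a 0, ccoef a 1, ccoef a 2, ccoef a 3]).det *
      (negacirculant ![ecoef a 0, ecoef a 1, ecoef a 2, ecoef a 3,
        ecoef a 4, ecoef a 5, ecoef a 6, ecoef a 7]).det := by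
  have h : (circMatrix a).det = (circulant (n := Fin (8 + 8)) a).det := rfl
  rw [h, det_circulant_eq_mul_det_negacirculant (n := 8),
    det_circulant_eq_mul_det_negacirculant (n := 4)]
  congr 4 <;> ext i <;> fin_cases i <;> rfl

theorem det_circulant_one_one_two_zero :
    (circulant ![1, 1, 2, 0] : Matrix (Fin 4) (Fin 4) ℤ).det = 16 := by
  decide

theorem det_negacirculant_eq_absNorm (x : ZetaEightInt) :
    (negacirculant ![x.re.re, x.im.re, x.re.im, x.im.im]).det = absNorm x := by
  rw [det_negacirculant_fin_four, absNorm_apply, Zsqrtd.norm_def, re_norm, im_norm]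
  simp only [Matrix.cons_val]
  ring

theorem thirty_two_mul_absNorm_add_four_mul_mem_S16 (k : ZetaEightInt) :
    32 * absNorm (1 + omega + 2 * omega ^ 2 + 4 * k) ∈ S16 := by
  obtain ⟨⟨k₀, k₂⟩, ⟨k₁, k₃⟩⟩ := k
  -- `a` is the polynomial with reductions `1 + X + 2X²` modulo `X⁴ - 1`,
  -- `1 + X + 2X² + 4k` modulo `X⁴ + 1` and `1 + X` modulo `X⁸ + 1`.
  let a : Fin 16 → ℤ := ![1 + k₀, 1 + k₁, 1 + k₂, k₃, -k₀, -k₁, -k₂, -k₃,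
    k₀, k₁, 1 + k₂, k₃, -k₀, -k₁, -k₂, -k₃]
  have hb : ![bcoef a 0, bcoef a 1, bcoef a 2, bcoef a 3] = ![1, 1, 2, 0] := by
    ext i
    fin_cases i <;> dsimp [a, bcoef] <;> ring
  have hc : ![ccoef a 0, ccoef a 1, ccoef a 2, ccoef a 3] =
      ![1 + 4 * k₀, 1 + 4 * k₁, 2 + 4 * k₂, 4 * k₃] := by
    ext i
    fin_cases i <;> dsimp [a, ccoef] <;> ring
  have he : ![ecoef a 0, ecoef a 1, ecoef a 2, ecoef a 3, ecoef a 4, ecoef a 5, ecoef a 6,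
      ecoef a 7] = ![1, 1, 0, 0, 0, 0, 0, 0] := by
    simp [a, ecoef]
  refine ⟨a, ?_⟩
  rw [det_circMatrix, hb, hc, he, det_circulant_one_one_two_zero, det_negacirculant_one_add_X,
    one_add_omega_add_two_mul_omega_sq_add_four_mul, ← det_negacirculant_eq_absNorm]
  ring

theorem thirty_two_mul_absNorm_mem_S16 {x : ZetaEightInt}
    (hre : IsPlusMinusThreeModEight x.norm.re) (him : IsPlusMinusThreeModEight x.norm.im) :
    32 * absNorm x ∈ S16 := by
  obtain ⟨k, hk⟩ := exists_absNorm_add_four_mul hre him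
  exact hk ▸ thirty_two_mul_absNorm_add_four_mul_mem_S16 k

end CirculantDeterminant

theorem sixty_four_p_mem_S16_of_one_mod_eight (p : ℕ) (hp : p.Prime) (h1 : p % 8 = 1)
    (a b : ℤ) (hab : (p : ℤ) = a ^ 2 + b ^ 2)
    (hsum : a + b ≡ 3 [ZMOD 8] ∨ a + b ≡ -3 [ZMOD 8])
    (hdiff : a - b ≡ 3 [ZMOD 8] ∨ a - b ≡ -3 [ZMOD 8]) :
    (64 * p : ℤ) ∈ S16 := by
  have hπ : (⟨a, b⟩ : GaussianInt).norm = p := by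
    rw [Zsqrtd.norm_def, hab]
    ring
  obtain ⟨x, hx⟩ := ZetaEightInt.exists_norm_eq_of_prime_one_mod_eight hp h1 hπ
  have hy : ((1 + QuadraticAlgebra.omega) * x).norm = ⟨a + b, -(a - b)⟩ := by
    rw [ZetaEightInt.norm_one_add_omega_mul, hx]
  have hmem : 32 * ZetaEightInt.absNorm ((1 + QuadraticAlgebra.omega) * x) ∈ S16 := by
    apply thirty_two_mul_absNorm_mem_S16 <;> rw [hy]
    · exact hsum
    · exact IsPlusMinusThreeModEight.neg hdiff
  have h64 : (64 * p : ℤ) = 32 * ZetaEightInt.absNorm ((1 + QuadraticAlgebra.omega) * x) := by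
    rw [ZetaEightInt.absNorm_apply, hy, Zsqrtd.norm_def, hab]
    ring
  rwa [h64]
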